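/- Let Γ be a flat y-monotone orthogonal drawing of a finite simple planar graph G. Then there exists a flat visibility representation Γ' of G with the same y-coordinates as Γ and the same left-to-right order in each row. In particular, Γ' has the same height as Γ. -/

import Mathlib

open Set

/-- A point in the plane. -/
abbrev Pt : Type := ℝ × ℝ

/-- A point has integer coordinates. -/
def IsIntPt (p : Pt) : Prop := (∃ a : ℤ, p.1 = (a : ℝ)) ∧ (∃ b : ℤ, p.2 = (b : ℝ))

/-- The (closed) segments of a polygonal chain, as pairs of consecutive corners. -/
def chainSegs (l : List Pt) : List (Pt × Pt) := l.zip l.tail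

/-- The set of points covered by a polygonal chain. -/
def chainSet (l : List Pt) : Set Pt := ⋃ s ∈ chainSegs l, segment ℝ s.1 s.2

/-- A polygonal chain is simple (non-self-intersecting): it has at least two
corners, all corners are distinct, and two of its segments meet only if they are
consecutive, and then only in their shared corner. -/
def IsSimpleChain (l : List Pt) : Prop :=
  2 ≤ l.length ∧ l.Nodup ∧
    ∀ i j : ℕ, i < j → ∀ (hi : i < (chainSegs l).length) (hj : j < (chainSegs l).length),
      segment ℝ ((chainSegs l).get ⟨i, hi⟩).1 ((chainSegs l).get ⟨i, hi⟩).2 ∩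
        segment ℝ ((chainSegs l).get ⟨j, hj⟩).1 ((chainSegs l).get ⟨j, hj⟩).2 ⊆
        if j = i + 1 then {((chainSegs l).get ⟨j, hj⟩).1} else (∅ : Set Pt)

/-- Every interior corner of the chain is a genuine bend (a direction change). -/
def GenuineBends (l : List Pt) : Prop :=
  ∀ i : ℕ, ∀ h : i + 2 < l.length,
    ¬ Collinear ℝ ({l.get ⟨i, by omega⟩, l.get ⟨i + 1, by omega⟩, l.get ⟨i + 2, h⟩} : Set Pt)

/-- The chain is a y-monotone path (horizontal segments allowed). -/
def IsMonoChain (l : List Pt) : Prop :=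
  (l.map Prod.snd).Chain' (· ≤ ·) ∨ (l.map Prod.snd).Chain' (fun a b => b ≤ a)

/-- All segments of the chain are horizontal or vertical. -/
def IsOrthoChain (l : List Pt) : Prop :=
  ∀ s ∈ chainSegs l, s.1.1 = s.2.1 ∨ s.1.2 = s.2.2

/-- A poly-line drawing of a graph `G`: every vertex is a point, and every edge
`uv` is the polygonal chain through the list `bends u v` of bend points
(listed in order from `u` to `v`). -/
structure PolylineDrawing {V : Type*} (G : SimpleGraph V) where
  pos : V → Pt
  bends : V → V → List Pt
  bends_symm : ∀ u v, bends v u = (bends u v).reverse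

namespace PolylineDrawing

variable {V : Type*} {G : SimpleGraph V}

/-- The corner list of the curve of edge `uv`. -/
def chain (D : PolylineDrawing G) (u v : V) : List Pt :=
  D.pos u :: (D.bends u v ++ [D.pos v])

/-- The set of points of the curve of edge `uv`. -/
def curve (D : PolylineDrawing G) (u v : V) : Set Pt := chainSet (D.chain u v)

/-- The defining elements of the drawing: vertex points and bends. -/
def points (D : PolylineDrawing G) : Set Pt :=
  Set.range D.pos ∪ ⋃ (u) (v) (_ : G.Adj u v), {p | p ∈ D.bends u v}

/-- The drawing is planar: vertex points are pairwise distinct, every edge curve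
is a simple chain whose interior corners are genuine bends, an edge curve contains
no vertex point other than its endpoints, and two distinct edge curves intersect
only in points of common endpoints. -/
def IsPlanar (D : PolylineDrawing G) : Prop :=
  Function.Injective D.pos ∧
  (∀ u v, G.Adj u v → IsSimpleChain (D.chain u v) ∧ GenuineBends (D.chain u v)) ∧
  (∀ u v w, G.Adj u v → w ≠ u → w ≠ v → D.pos w ∉ D.curve u v) ∧
  (∀ u v x y, G.Adj u v → G.Adj x y → s(u, v) ≠ s(x, y) →
    D.curve u v ∩ D.curve x y ⊆ D.pos '' (({u, v} : Set V) ∩ ({x, y} : Set V)))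

/-- All defining elements have integer coordinates. -/
def IntCoords (D : PolylineDrawing G) : Prop := ∀ p ∈ D.points, IsIntPt p

/-- A straight-line drawing: no edge has bends. -/
def IsStraightLine (D : PolylineDrawing G) : Prop := ∀ u v : V, D.bends u v = []

/-- Every edge curve is a y-monotone path. -/
def IsYMonotone (D : PolylineDrawing G) : Prop :=
  ∀ u v, G.Adj u v → IsMonoChain (D.chain u v)

/-- The drawing fits (after translation) in the rows `1, …, h`. -/
def InHeight (D : PolylineDrawing G) (h : ℕ) : Prop :=
  ∃ y0 : ℤ, ∀ p ∈ D.points, (y0 : ℝ) ≤ p.2 ∧ p.2 ≤ (y0 : ℝ) + (h : ℝ) - 1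

/-- The drawing fits (after translation) in the columns `1, …, w`. -/
def InWidth (D : PolylineDrawing G) (w : ℕ) : Prop :=
  ∃ x0 : ℤ, ∀ p ∈ D.points, (x0 : ℝ) ≤ p.1 ∧ p.1 ≤ (x0 : ℝ) + (w : ℝ) - 1

end PolylineDrawing

/-- An axis-parallel box (possibly degenerated to a segment or a point). -/
structure Box where
  x1 : ℝ
  x2 : ℝ
  y1 : ℝ
  y2 : ℝ
  hx : x1 ≤ x2
  hy : y1 ≤ y2

/-- The set of points of a box. -/
def Box.pts (b : Box) : Set Pt := Set.Icc b.x1 b.x2 ×ˢ Set.Icc b.y1 b.y2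

/-- An orthogonal drawing of a graph `G`: every vertex is an axis-aligned box, and
every edge `uv` is an axis-parallel polygonal chain `chain u v` (its first corner is
the attachment point on the box of `u`, its last corner the attachment point on the
box of `v`). -/
structure OrthDrawing {V : Type*} (G : SimpleGraph V) where
  box : V → Box
  chain : V → V → List Pt
  chain_symm : ∀ u v, chain v u = (chain u v).reverse

namespace OrthDrawing

variable {V : Type*} {G : SimpleGraph V}

/-- The set of points of the curve of edge `uv`. -/
def curve (D : OrthDrawing G) (u v : V) : Set Pt := chainSet (D.chain u v)

/-- The defining elements of the drawing: corners of vertex boxes, and corners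
(attachment points and bends) of edge chains. -/
def points (D : OrthDrawing G) : Set Pt :=
  (⋃ v, ({((D.box v).x1, (D.box v).y1), ((D.box v).x1, (D.box v).y2),
          ((D.box v).x2, (D.box v).y1), ((D.box v).x2, (D.box v).y2)} : Set Pt)) ∪
    ⋃ (u) (v) (_ : G.Adj u v), {p | p ∈ D.chain u v}

/-- All points covered by the drawing (boxes and edge curves). -/
def region (D : OrthDrawing G) : Set Pt :=
  (⋃ v, (D.box v).pts) ∪ ⋃ (u) (v) (_ : G.Adj u v), D.curve u v

/-- The drawing is planar: vertex boxes are pairwise disjoint; every edge curve is a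
simple axis-parallel chain, with genuine bends, joining the boxes of its endpoints;
an edge curve meets a vertex box only in its attachment points; and two distinct
edge curves intersect only in common endpoints. -/
def IsPlanar (D : OrthDrawing G) : Prop :=
  (∀ u v : V, u ≠ v → Disjoint (D.box u).pts (D.box v).pts) ∧
  (∀ u v, G.Adj u v → IsSimpleChain (D.chain u v) ∧ IsOrthoChain (D.chain u v) ∧
      GenuineBends (D.chain u v)) ∧
  (∀ u v, G.Adj u v → ∃ p q l, D.chain u v = p :: (l ++ [q]) ∧
      p ∈ (D.box u).pts ∧ q ∈ (D.box v).pts) ∧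
  (∀ u v w, G.Adj u v → D.curve u v ∩ (D.box w).pts ⊆
      {p | (w = u ∧ (D.chain u v).head? = some p) ∨
           (w = v ∧ (D.chain u v).getLast? = some p)}) ∧
  (∀ u v x y, G.Adj u v → G.Adj x y → s(u, v) ≠ s(x, y) →
      D.curve u v ∩ D.curve x y ⊆
        {p | ((D.chain u v).head? = some p ∨ (D.chain u v).getLast? = some p) ∧
             ((D.chain x y).head? = some p ∨ (D.chain x y).getLast? = some p)})

/-- A flat drawing: every vertex box is degenerated to a horizontal segment. -/
def IsFlat (D : OrthDrawing G) : Prop := ∀ v, (D.box v).y1 = (D.box v).y2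

/-- A visibility representation: an orthogonal drawing without bends, i.e. every
edge is a single horizontal or vertical segment. -/
def IsVR (D : OrthDrawing G) : Prop := ∀ u v, G.Adj u v → (D.chain u v).length = 2

/-- Every edge curve is a y-monotone path. -/
def IsYMonotone (D : OrthDrawing G) : Prop := ∀ u v, G.Adj u v → IsMonoChain (D.chain u v)

/-- All defining elements have integer coordinates. -/
def IntCoords (D : OrthDrawing G) : Prop := ∀ p ∈ D.points, IsIntPt p

/-- The drawing fits (after translation) in the rows `1, …, h`. -/
def InHeight (D : OrthDrawing G) (h : ℕ) : Prop :=
  ∃ y0 : ℤ, ∀ p ∈ D.points, (y0 : ℝ) ≤ p.2 ∧ p.2 ≤ (y0 : ℝ) + (h : ℝ) - 1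

/-- The drawing fits (after translation) in the columns `1, …, w`. -/
def InWidth (D : OrthDrawing G) (w : ℕ) : Prop :=
  ∃ x0 : ℤ, ∀ p ∈ D.points, (x0 : ℝ) ≤ p.1 ∧ p.1 ≤ (x0 : ℝ) + (w : ℝ) - 1

end OrthDrawing

/-!
Call every vertex, and every edge between different rows, directed upwards, a strand. A strand
crosses an interval of rows, and in each of them it occupies an interval. Strands are vertical in
the gap between two consecutive rows, so their left-to-right order just above a row is inherited
from the row above. Hence, inserting the strands by increasing lowest row, one can rank all of
them globally so that the order in every row is respected: a new strand has to be compared only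
with strands that are present in its lowest row. In the new drawing every edge strand is a vertical
line at its rank, and a vertex spans the ranks of the strands attached to it. An edge within a row
joins the facing ends of two vertices that are neighbours in this row, so it meets nothing else.
-/

/-! ### Ranking by insertion -/

lemma exists_rank_on {A ι : Type*} [LinearOrder ι] (start : A → ι) {P : A → A → Prop}
    (irrefl : ∀ a, ¬ P a a)
    (trans : ∀ a b c, start a ≤ start b → start c ≤ start b → P a b → P b c → P a c)
    (S : Finset A) : ∃ f : A → ℚ, ∀ a ∈ S, ∀ b ∈ S, P a b → f a < f b := by
  classical
  induction S using Finset.induction_on_max_value start with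
  | empty => exact ⟨0, by simp⟩
  | insert t S htS hmax ih =>
    obtain ⟨f, hf⟩ := ih
    obtain ⟨m, hlt, hgt⟩ := Order.exists_between_finsets
      (lo := {a ∈ S | P a t}.image f) (hi := {a ∈ S | P t a}.image f) <| by
        simp only [Finset.forall_mem_image, Finset.mem_filter]
        exact fun a ⟨haS, hat⟩ b ⟨hbS, htb⟩ =>
          hf a haS b hbS (trans a t b (hmax a haS) (hmax b hbS) hat htb)
    simp only [Finset.forall_mem_image, Finset.mem_filter, and_imp] at hlt hgt
    have update_of_mem (a : A) (ha : a ∈ S) : Function.update f t m a = f a :=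
      Function.update_of_ne (ne_of_mem_of_not_mem ha htS) ..
    refine ⟨Function.update f t m, fun a ha b hb hab => ?_⟩
    rcases Finset.mem_insert.1 ha with rfl | haS <;> rcases Finset.mem_insert.1 hb with rfl | hbS
    · exact absurd hab (irrefl _)
    · rw [Function.update_self, update_of_mem b hbS]
      exact hgt hbS hab
    · rw [Function.update_self, update_of_mem a haS]
      exact hlt haS hab
    · rw [update_of_mem a haS, update_of_mem b hbS]
      exact hf a haS b hbS hab

lemma exists_int_rank {A K : Type*} [Finite A] [Preorder K] (g : A → K) :
    ∃ f : A → ℤ, ∀ a b, g a < g b → f a < f b :=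
  ⟨fun a => {b | g b < g a}.ncard, fun a _ hab => Nat.cast_lt.2 <|
    Set.ncard_lt_ncard ⟨fun _ hc => lt_trans hc hab, fun h => lt_irrefl _ (h hab : g a < g a)⟩
      (Set.toFinite _)⟩

/-- Each `a` is alive at the levels from `bot a` to `top a`, and the items alive at a level are
ordered by their keys. If, between consecutive levels, the order is inherited downwards, then the
orders at all levels are restrictions of a single one. -/
lemma exists_rank_of_sweep {A K : Type*} [Finite A] [Preorder K] (bot top : A → ℤ)
    (key : A → ℤ → K)
    (step : ∀ a b, ∀ k ∈ Ico (bot a) (top a), k ∈ Ico (bot b) (top b) →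
      key a (k + 1) < key b (k + 1) → key a k < key b k) :
    ∃ f : A → ℤ, ∀ a b, ∀ k ∈ Icc (bot a) (top a), k ∈ Icc (bot b) (top b) →
      key a k < key b k → f a < f b := by
  have inherit (a b : A) (j k : ℤ) (hjk : j ≤ k) (ha : bot a ≤ j) (hb : bot b ≤ j)
      (ha' : k ≤ top a) (hb' : k ≤ top b) (h : key a k < key b k) : key a j < key b j := by
    induction k, hjk using Int.leInduction with
    | base => exact h
    | succ k hjk ih =>
      exact ih (by omega) (by omega)
        (step a b k ⟨by omega, by omega⟩ ⟨by omega, by omega⟩ h)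
  let P (a b : A) : Prop :=
    ∃ k ∈ Icc (bot a) (top a), k ∈ Icc (bot b) (top b) ∧ key a k < key b k
  have trans (a b c : A) (hab : bot a ≤ bot b) (hcb : bot c ≤ bot b) : P a b → P b c → P a c := by
    rintro ⟨j, ⟨-, hja⟩, ⟨hbj, hjb⟩, hj⟩ ⟨k, ⟨hbk, hkb⟩, ⟨-, hkc⟩, hk⟩
    exact ⟨bot b, ⟨hab, hbj.trans hja⟩, ⟨hcb, hbk.trans hkc⟩,
      (inherit a b _ j hbj hab le_rfl hja hjb hj).trans
        (inherit b c _ k hbk le_rfl hcb hkb hkc hk)⟩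
  obtain ⟨g, hg⟩ := exists_rank_on bot (fun a ⟨_, _, _, h⟩ => lt_irrefl _ h) trans
    (Set.toFinite univ).toFinset
  obtain ⟨f, hf⟩ := exists_int_rank g
  exact ⟨f, fun a b k ha hb h => hf a b (hg a (by simp) b (by simp) ⟨k, ha, hb, h⟩)⟩

/-! ### Intervals -/

lemma isPreconnected_union_of_nonempty {X : Type*} [TopologicalSpace X] {s t : Set X}
    (hs : IsPreconnected s) (ht : IsPreconnected t)
    (h : s.Nonempty → t.Nonempty → (s ∩ t).Nonempty) : IsPreconnected (s ∪ t) := by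
  rcases s.eq_empty_or_nonempty with rfl | hs'
  · rwa [empty_union]
  rcases t.eq_empty_or_nonempty with rfl | ht'
  · rwa [union_empty]
  exact hs.union' (h hs' ht') ht

lemma lt_of_ordConnected_of_disjoint {α : Type*} [LinearOrder α] {s t : Set α}
    (hs : s.OrdConnected) (ht : t.OrdConnected) (hst : Disjoint s t) {a b x y : α}
    (ha : a ∈ s) (hb : b ∈ t) (hab : a < b) (hx : x ∈ s) (hy : y ∈ t) : x < y := by
  by_contra! hyx
  rcases le_total a y with h | h
  · exact disjoint_left.1 hst (hs.out ha hx ⟨h, hyx⟩) hy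
  · exact disjoint_left.1 hst ha (ht.out hy hb ⟨h, hab.le⟩)

/-! ### Chains -/

/-- The x-coordinates of the points at which a set meets the horizontal line at height `y`. -/
def slice (S : Set Pt) (y : ℝ) : Set ℝ := {x | (x, y) ∈ S}

lemma slice_union (S T : Set Pt) (y : ℝ) : slice (S ∪ T) y = slice S y ∪ slice T y := rfl

lemma mem_segment_of_fst_eq {p q z : Pt} (h : p.1 = q.1) :
    z ∈ segment ℝ p q ↔ z.1 = p.1 ∧ z.2 ∈ uIcc p.2 q.2 := by
  obtain ⟨a, b⟩ := p
  obtain ⟨c, d⟩ := q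
  obtain rfl : a = c := h
  rw [← Prod.image_mk_segment_right, segment_eq_uIcc]
  simp only [mem_image, Prod.ext_iff]
  grind

lemma mem_segment_of_snd_eq {p q z : Pt} (h : p.2 = q.2) :
    z ∈ segment ℝ p q ↔ z.2 = p.2 ∧ z.1 ∈ uIcc p.1 q.1 := by
  obtain ⟨a, b⟩ := p
  obtain ⟨c, d⟩ := q
  obtain rfl : b = d := h
  rw [← Prod.image_mk_segment_left, segment_eq_uIcc]
  simp only [mem_image, Prod.ext_iff]
  grind

lemma snd_mem_Icc_of_mem_segment {p q z : Pt} (h : p.2 ≤ q.2) (hz : z ∈ segment ℝ p q) :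
    z.2 ∈ Icc p.2 q.2 :=
  segment_eq_Icc h ▸ (Prod.segment_subset (𝕜 := ℝ) p q hz).2

lemma isPreconnected_slice_segment (p q : Pt) (y : ℝ) :
    IsPreconnected (slice (segment ℝ p q) y) := by
  refine Convex.isPreconnected fun a ha b hb s t hs ht hst => ?_
  have := convex_segment (𝕜 := ℝ) p q ha hb hs ht hst
  rwa [Prod.smul_mk, Prod.smul_mk, Prod.mk_add_mk, ← add_smul, hst, one_smul] at this

lemma chainSet_cons_cons (p q : Pt) (l : List Pt) :
    chainSet (p :: q :: l) = segment ℝ p q ∪ chainSet (q :: l) := by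
  simp [chainSet, chainSegs]

lemma chainSet_singleton (p : Pt) : chainSet [p] = ∅ := by
  simp [chainSet, chainSegs]

lemma chainSet_pair (p q : Pt) : chainSet [p, q] = segment ℝ p q := by
  rw [chainSet_cons_cons, chainSet_singleton, union_empty]

lemma head_mem_chainSet {p : Pt} {l : List Pt} (hl : l ≠ []) : p ∈ chainSet (p :: l) := by
  obtain ⟨q, l, rfl⟩ := List.exists_cons_of_ne_nil hl
  exact chainSet_cons_cons p q l ▸ Or.inl (left_mem_segment ℝ p q)

lemma last_mem_chainSet (p : Pt) (l : List Pt) (q : Pt) : q ∈ chainSet (p :: (l ++ [q])) := by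
  induction l generalizing p with
  | nil => exact chainSet_pair p q ▸ right_mem_segment ℝ p q
  | cons a l ih => exact chainSet_cons_cons p a _ ▸ Or.inr (ih a)

lemma snd_le_of_mem_chainSet {p z : Pt} {l : List Pt}
    (h : ((p :: l).map Prod.snd).IsChain (· ≤ ·)) (hz : z ∈ chainSet (p :: l)) : p.2 ≤ z.2 := by
  induction l generalizing p with
  | nil => simp [chainSet_singleton] at hz
  | cons q l ih =>
    obtain ⟨hpq, htail⟩ := List.isChain_cons_cons.1 h
    rcases chainSet_cons_cons p q l ▸ hz with hz | hz
    · exact (snd_mem_Icc_of_mem_segment hpq hz).1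
    · exact hpq.trans (ih htail hz)

lemma isPreconnected_slice_chainSet {l : List Pt} (h : (l.map Prod.snd).IsChain (· ≤ ·))
    (y : ℝ) : IsPreconnected (slice (chainSet l) y) := by
  induction l with
  | nil => simp [slice, chainSet, chainSegs, isPreconnected_empty]
  | cons p l ih =>
    rcases l with _ | ⟨q, l⟩
    · simp [slice, chainSet_singleton, isPreconnected_empty]
    obtain ⟨hpq, htail⟩ := List.isChain_cons_cons.1 h
    rw [chainSet_cons_cons, slice_union]
    refine isPreconnected_union_of_nonempty (isPreconnected_slice_segment p q y) (ih htail) ?_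
    rintro ⟨a, ha⟩ ⟨b, hb⟩
    -- a slice meeting both parts is at the height of the corner `q` that they share
    obtain rfl : q.2 = y :=
      le_antisymm (snd_le_of_mem_chainSet htail hb) (snd_mem_Icc_of_mem_segment hpq ha).2
    have hl : l ≠ [] := by
      rintro rfl
      simp [slice, chainSet_singleton] at hb
    exact ⟨q.1, right_mem_segment ℝ p q, head_mem_chainSet hl⟩

lemma exists_chainSegs_crossing {y : ℝ} {p q : Pt} {l : List Pt} (hp : p.2 ≤ y) (hq : q ∈ l)
    (hy : y < q.2) : ∃ s ∈ chainSegs (p :: l), s.1.2 ≤ y ∧ y < s.2.2 := by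
  induction l generalizing p with
  | nil => simp at hq
  | cons r l ih =>
    rcases lt_or_ge y r.2 with hr | hr
    · exact ⟨(p, r), by simp [chainSegs], hp, hr⟩
    · have hql : q ∈ l := (List.mem_cons.1 hq).resolve_left (by rintro rfl; exact hr.not_gt hy)
      obtain ⟨s, hs, h⟩ := ih hr hql
      exact ⟨s, List.mem_cons_of_mem _ hs, h⟩

lemma rel_of_mem_of_isChain {α : Type*} {R : α → α → Prop} [Std.Refl R] [IsTrans α R]
    {a b z : α} {l : List α} (h : (a :: (l ++ [b])).IsChain R) (hz : z ∈ a :: (l ++ [b])) :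
    R a z ∧ R z b := by
  have hp := List.isChain_iff_pairwise.1 h
  constructor
  · rcases List.mem_cons.1 hz with rfl | hz
    · exact refl_of R _
    · exact List.rel_of_pairwise_cons hp hz
  · rw [← List.cons_append, List.pairwise_append] at hp
    rw [← List.cons_append, List.mem_append, List.mem_singleton] at hz
    rcases hz with hz | rfl
    · exact hp.2.2 z hz b (List.mem_singleton_self b)
    · exact refl_of R _

lemma isChain_le_of_isMonoChain {p q : Pt} {l : List Pt} (h : IsMonoChain (p :: (l ++ [q])))
    (hpq : p.2 ≤ q.2) : ((p :: (l ++ [q])).map Prod.snd).IsChain (· ≤ ·) := by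
  rcases h with h | h
  · exact h
  -- a descending chain that does not end below its start is level
  simp only [List.map_cons, List.map_append, List.map_nil] at h ⊢
  have level (z : ℝ) (hz : z ∈ p.2 :: (l.map Prod.snd ++ [q.2])) : z = p.2 :=
    have := rel_of_mem_of_isChain (R := fun a b : ℝ => b ≤ a) h hz
    le_antisymm this.1 (hpq.trans this.2)
  exact List.isChain_iff_pairwise.2 <| List.pairwise_of_forall_mem_list fun a ha b hb =>
    ((level a ha).trans (level b hb).symm).le

lemma isSimpleChain_pair {p q : Pt} (h : p ≠ q) : IsSimpleChain [p, q] := by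
  refine ⟨le_rfl, by simpa using h, fun i j hij hi hj => ?_⟩
  simp only [chainSegs, List.tail_cons, List.zip_cons_cons, List.zip_nil_right,
    List.length_singleton] at hj
  omega

lemma genuineBends_pair (p q : Pt) : GenuineBends [p, q] := fun i hi => by
  simp only [List.length_cons, List.length_nil] at hi
  omega

lemma isOrthoChain_pair {p q : Pt} (h : p.1 = q.1 ∨ p.2 = q.2) : IsOrthoChain [p, q] := by
  simpa [IsOrthoChain, chainSegs] using h

lemma isMonoChain_pair (p q : Pt) : IsMonoChain [p, q] :=
  (le_total p.2 q.2).imp (List.isChain_pair.2 ·) (List.isChain_pair.2 ·)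

namespace OrthDrawing

variable {V : Type*} {G : SimpleGraph V} {D : OrthDrawing G}

/-! ### Flat drawings -/

/-- All defining elements lie on rows; their x-coordinates are unrestricted. -/
def HasIntRows (D : OrthDrawing G) : Prop := ∀ p ∈ D.points, ∃ b : ℤ, p.2 = b

/-- The row of a vertex of a flat drawing. The floor only serves to make it an integer: in a
drawing with `HasIntRows` it changes nothing. -/
noncomputable def row (D : OrthDrawing G) (v : V) : ℤ := ⌊(D.box v).y1⌋

lemma lower_left_mem_points (v : V) : ((D.box v).x1, (D.box v).y1) ∈ D.points :=
  Or.inl (mem_iUnion.2 ⟨v, by simp⟩)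

lemma mem_points_of_mem_chain {u v : V} (h : G.Adj u v) {p : Pt} (hp : p ∈ D.chain u v) :
    p ∈ D.points :=
  Or.inr (mem_iUnion₂.2 ⟨u, v, mem_iUnion.2 ⟨h, hp⟩⟩)

lemma cast_row (hrow : D.HasIntRows) (v : V) : (D.row v : ℝ) = (D.box v).y1 := by
  obtain ⟨b, hb⟩ := hrow _ (lower_left_mem_points v)
  simp only at hb
  rw [row, hb, Int.floor_intCast]

lemma row_eq_row_iff (hrow : D.HasIntRows) {u v : V} :
    D.row u = D.row v ↔ (D.box u).y1 = (D.box v).y1 := by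
  rw [← cast_row hrow, ← cast_row hrow, Int.cast_inj]

lemma mem_box_iff (hflat : D.IsFlat) {v : V} {p : Pt} :
    p ∈ (D.box v).pts ↔ p.1 ∈ Icc (D.box v).x1 (D.box v).x2 ∧ p.2 = (D.box v).y1 := by
  rw [Box.pts, mem_prod, ← hflat v, Icc_self, mem_singleton_iff]

lemma mem_box_row_iff (hflat : D.IsFlat) (hrow : D.HasIntRows) {v : V} {x : ℝ} {k : ℤ} :
    (x, (k : ℝ)) ∈ (D.box v).pts ↔ x ∈ Icc (D.box v).x1 (D.box v).x2 ∧ D.row v = k := by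
  rw [mem_box_iff hflat, ← cast_row hrow, Int.cast_inj, eq_comm (a := k)]

lemma left_end_mem_box (hflat : D.IsFlat) (v : V) :
    ((D.box v).x1, (D.box v).y1) ∈ (D.box v).pts :=
  (mem_box_iff hflat).2 ⟨left_mem_Icc.2 (D.box v).hx, rfl⟩

lemma IsPlanar.eq_of_mem_box (hpl : D.IsPlanar) {u v : V} {p : Pt} (hu : p ∈ (D.box u).pts)
    (hv : p ∈ (D.box v).pts) : u = v := by
  by_contra huv
  exact disjoint_left.1 (hpl.1 u v huv) hu hv

lemma IsPlanar.exists_chain (hpl : D.IsPlanar) {u v : V} (h : G.Adj u v) :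
    ∃ p q l, D.chain u v = p :: (l ++ [q]) ∧ p ∈ (D.box u).pts ∧ q ∈ (D.box v).pts :=
  hpl.2.2.1 u v h

lemma IsPlanar.mem_ends_of_mem_curve (hpl : D.IsPlanar) {u v w : V} (h : G.Adj u v) {p : Pt}
    (hp : p ∈ D.curve u v) (hw : p ∈ (D.box w).pts) : w ∈ ({u, v} : Set V) :=
  (hpl.2.2.2.1 u v w h ⟨hp, hw⟩).imp And.left And.left

lemma IsPlanar.exists_end_of_head_or_last (hpl : D.IsPlanar) {u v : V} (h : G.Adj u v) {p : Pt}
    (hp : (D.chain u v).head? = some p ∨ (D.chain u v).getLast? = some p) :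
    ∃ w ∈ ({u, v} : Set V), p ∈ (D.box w).pts := by
  obtain ⟨a, b, l, hc, ha, hb⟩ := hpl.exists_chain h
  rw [hc, List.head?_cons, ← List.cons_append, List.getLast?_concat, Option.some_inj,
    Option.some_inj] at hp
  rcases hp with rfl | rfl
  · exact ⟨u, Or.inl rfl, ha⟩
  · exact ⟨v, Or.inr rfl, hb⟩

lemma IsPlanar.exists_end_of_mem_curves (hpl : D.IsPlanar) {u v a b : V} (h : G.Adj u v)
    (h' : G.Adj a b) (hne : s(u, v) ≠ s(a, b)) {p : Pt} (hp : p ∈ D.curve u v)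
    (hp' : p ∈ D.curve a b) :
    ∃ w ∈ ({u, v} : Set V), w ∈ ({a, b} : Set V) ∧ p ∈ (D.box w).pts := by
  obtain ⟨hend, hend'⟩ := hpl.2.2.2.2 u v a b h h' hne ⟨hp, hp'⟩
  obtain ⟨w, hw, hpw⟩ := hpl.exists_end_of_head_or_last h hend
  obtain ⟨w', hw', hpw'⟩ := hpl.exists_end_of_head_or_last h' hend'
  obtain rfl := hpl.eq_of_mem_box hpw hpw'
  exact ⟨w, hw, hw', hpw⟩

lemma IsPlanar.exists_mem_curve_mem_box (hpl : D.IsPlanar) {u v w : V} (h : G.Adj u v)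
    (hw : w ∈ ({u, v} : Set V)) : ∃ p ∈ D.curve u v, p ∈ (D.box w).pts := by
  obtain ⟨a, b, l, hc, ha, hb⟩ := hpl.exists_chain h
  rw [curve, hc]
  rcases hw with rfl | rfl
  · exact ⟨a, head_mem_chainSet (by simp), ha⟩
  · exact ⟨b, last_mem_chainSet a l b, hb⟩

lemma isChain_chain (hpl : D.IsPlanar) (hflat : D.IsFlat) (hmono : D.IsYMonotone) {u v : V}
    (h : G.Adj u v) (huv : (D.box u).y1 ≤ (D.box v).y1) :
    ((D.chain u v).map Prod.snd).IsChain (· ≤ ·) := by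
  obtain ⟨a, b, l, hc, ha, hb⟩ := hpl.exists_chain h
  rw [← ((mem_box_iff hflat).1 ha).2, ← ((mem_box_iff hflat).1 hb).2] at huv
  have := hmono u v h
  rw [hc] at this ⊢
  exact isChain_le_of_isMonoChain this huv

lemma snd_mem_Icc_of_mem_chain (hpl : D.IsPlanar) (hflat : D.IsFlat) (hmono : D.IsYMonotone)
    {u v : V} (h : G.Adj u v) (huv : (D.box u).y1 ≤ (D.box v).y1) {p : Pt}
    (hp : p ∈ D.chain u v) : p.2 ∈ Icc (D.box u).y1 (D.box v).y1 := by
  have hchain := isChain_chain hpl hflat hmono h huv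
  obtain ⟨a, b, l, hc, ha, hb⟩ := hpl.exists_chain h
  rw [← ((mem_box_iff hflat).1 ha).2, ← ((mem_box_iff hflat).1 hb).2]
  rw [hc] at hp hchain
  simp only [List.map_cons, List.map_append, List.map_nil] at hchain
  exact rel_of_mem_of_isChain hchain (by simpa using List.mem_map_of_mem (f := Prod.snd) hp)

lemma exists_mem_Icc_of_mem_points (hpl : D.IsPlanar) (hflat : D.IsFlat)
    (hmono : D.IsYMonotone) {p : Pt} (hp : p ∈ D.points) :
    ∃ u v, p.2 ∈ Icc (D.box u).y1 (D.box v).y1 := by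
  simp only [points, mem_union, mem_iUnion, exists_prop] at hp
  rcases hp with ⟨v, hv⟩ | ⟨u, v, h, hp⟩
  · refine ⟨v, v, ?_⟩
    rw [Icc_self, mem_singleton_iff]
    rw [← hflat v] at hv
    rcases hv with rfl | rfl | rfl | rfl <;> rfl
  · rcases le_total (D.box u).y1 (D.box v).y1 with huv | huv
    · exact ⟨u, v, snd_mem_Icc_of_mem_chain hpl hflat hmono h huv hp⟩
    · refine ⟨v, u, snd_mem_Icc_of_mem_chain hpl hflat hmono h.symm huv ?_⟩
      rwa [D.chain_symm, List.mem_reverse]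

lemma inHeight_iff (hpl : D.IsPlanar) (hflat : D.IsFlat) (hmono : D.IsYMonotone) (h : ℕ) :
    D.InHeight h ↔
      ∃ y0 : ℤ, ∀ v, (y0 : ℝ) ≤ (D.box v).y1 ∧ (D.box v).y1 ≤ (y0 : ℝ) + (h : ℝ) - 1 := by
  refine exists_congr fun y0 => ⟨fun H v => H _ (lower_left_mem_points v), fun H p hp => ?_⟩
  obtain ⟨u, v, hu, hv⟩ := exists_mem_Icc_of_mem_points hpl hflat hmono hp
  exact ⟨(H u).1.trans hu, hv.trans (H v).2⟩

lemma exists_column (hpl : D.IsPlanar) (hflat : D.IsFlat) (hrow : D.HasIntRows) {u v : V}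
    (h : G.Adj u v) {k : ℤ} (hk : k ∈ Ico (D.row u) (D.row v)) :
    ∃ x : ℝ, ∀ t ∈ Icc (k : ℝ) (k + 1), (x, t) ∈ D.curve u v := by
  obtain ⟨a, b, l, hc, ha, hb⟩ := hpl.exists_chain h
  have hak : a.2 ≤ k := by
    rw [((mem_box_iff hflat).1 ha).2, ← cast_row hrow]
    exact_mod_cast hk.1
  have hkb : (k : ℝ) < b.2 := by
    rw [((mem_box_iff hflat).1 hb).2, ← cast_row hrow]
    exact_mod_cast hk.2
  obtain ⟨s, hs, hsk, hks⟩ :=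
    exists_chainSegs_crossing hak (List.mem_append_right l (List.mem_singleton_self b)) hkb
  rw [← hc] at hs
  -- the upper end of the segment lies on a row above `k`, so the segment reaches row `k + 1`
  obtain ⟨n, hn⟩ :=
    hrow _ (mem_points_of_mem_chain h (List.mem_of_mem_tail (List.of_mem_zip hs).2))
  have hks' : (k : ℝ) + 1 ≤ s.2.2 := by
    rw [hn] at hks ⊢
    exact_mod_cast hks
  have hvert : s.1.1 = s.2.1 :=
    ((hpl.2.1 u v h).2.1 s hs).resolve_right (hsk.trans_lt hks).ne
  refine ⟨s.1.1, fun t ht => mem_iUnion₂.2 ⟨s, hs, (mem_segment_of_fst_eq hvert).2 ⟨rfl, ?_⟩⟩⟩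
  exact mem_uIcc_of_le (hsk.trans ht.1) (ht.2.trans hks')

/-! ### Ink of a pair of vertices -/

/-- The points covered by the boxes of `u` and `v` and by the edge `uv`, if there is one. -/
def ink (D : OrthDrawing G) (u v : V) : Set Pt :=
  {p | G.Adj u v ∧ p ∈ D.curve u v} ∪ (D.box u).pts ∪ (D.box v).pts

lemma curve_subset_ink {u v : V} (h : G.Adj u v) : D.curve u v ⊆ D.ink u v :=
  fun _ hp => Or.inl (Or.inl ⟨h, hp⟩)

lemma box_subset_ink {u v w : V} (hw : w ∈ ({u, v} : Set V)) :
    (D.box w).pts ⊆ D.ink u v := by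
  rcases hw with rfl | rfl
  · exact fun _ hp => Or.inl (Or.inr hp)
  · exact fun _ hp => Or.inr hp

lemma mem_ink_iff {u v : V} {p : Pt} :
    p ∈ D.ink u v ↔
      G.Adj u v ∧ p ∈ D.curve u v ∨ ∃ w ∈ ({u, v} : Set V), p ∈ (D.box w).pts := by
  simp [ink, or_assoc]

lemma IsPlanar.mem_ends_of_mem_ink (hpl : D.IsPlanar) {u v w : V} {p : Pt}
    (hp : p ∈ D.ink u v) (hw : p ∈ (D.box w).pts) : w ∈ ({u, v} : Set V) := by
  rcases mem_ink_iff.1 hp with ⟨h, hp⟩ | ⟨w', hw', hp⟩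
  · exact hpl.mem_ends_of_mem_curve h hp hw
  · exact hpl.eq_of_mem_box hp hw ▸ hw'

lemma IsPlanar.exists_end_of_mem_inks (hpl : D.IsPlanar) {u v a b : V}
    (hne : s(u, v) ≠ s(a, b)) {p : Pt} (hp : p ∈ D.ink u v) (hp' : p ∈ D.ink a b) :
    ∃ w ∈ ({u, v} : Set V), w ∈ ({a, b} : Set V) ∧ p ∈ (D.box w).pts := by
  rcases mem_ink_iff.1 hp with ⟨h, hc⟩ | ⟨w, hw, hpw⟩
  · rcases mem_ink_iff.1 hp' with ⟨h', hc'⟩ | ⟨w, hw, hpw⟩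
    · exact hpl.exists_end_of_mem_curves h h' hne hc hc'
    · exact ⟨w, hpl.mem_ends_of_mem_curve h hc hpw, hw, hpw⟩
  · exact ⟨w, hw, hpl.mem_ends_of_mem_ink hp' hpw, hpw⟩

lemma isPreconnected_slice_box (hflat : D.IsFlat) (v : V) (y : ℝ) :
    IsPreconnected (slice (D.box v).pts y) := by
  simp only [slice, mem_box_iff hflat]
  by_cases h : y = (D.box v).y1
  · simp only [h, and_true, ofPred_mem_eq, isPreconnected_Icc]
  · simp only [h, and_false, ofPred_false, isPreconnected_empty]

lemma slice_curve_inter_slice_box_nonempty (hpl : D.IsPlanar) (hflat : D.IsFlat) {u v w : V}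
    (h : G.Adj u v) (hw : w ∈ ({u, v} : Set V)) {y : ℝ} (hy : (slice (D.box w).pts y).Nonempty) :
    (slice (D.curve u v) y ∩ slice (D.box w).pts y).Nonempty := by
  obtain ⟨x, hx⟩ := hy
  obtain ⟨p, hp, hpw⟩ := hpl.exists_mem_curve_mem_box h hw
  obtain rfl : p.2 = y := ((mem_box_iff hflat).1 hpw).2.trans ((mem_box_iff hflat).1 hx).2.symm
  exact ⟨p.1, hp, hpw⟩

lemma isPreconnected_slice_ink (hpl : D.IsPlanar) (hflat : D.IsFlat) (hmono : D.IsYMonotone)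
    {u v : V} (h : u = v ∨ G.Adj u v ∧ (D.box u).y1 ≤ (D.box v).y1) (y : ℝ) :
    IsPreconnected (slice (D.ink u v) y) := by
  rcases h with rfl | ⟨h, huv⟩
  · simpa [ink] using isPreconnected_slice_box hflat u y
  simp only [ink, h, true_and, slice_union]
  refine isPreconnected_union_of_nonempty (isPreconnected_union_of_nonempty
    (isPreconnected_slice_chainSet (isChain_chain hpl hflat hmono h huv) y)
    (isPreconnected_slice_box hflat u y) fun _ hu => ?_) (isPreconnected_slice_box hflat v y)
    fun _ hv => ?_
  · exact slice_curve_inter_slice_box_nonempty hpl hflat h (Or.inl rfl) hu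
  · exact (slice_curve_inter_slice_box_nonempty hpl hflat h (Or.inr rfl) hv).mono
      (inter_subset_inter_left _ subset_union_left)

/-! ### Strands -/

/-- An object that crosses rows: an edge between different rows, directed upwards from `lo` to
`hi`, or a vertex `v`, encoded as `lo = hi = v`. -/
@[ext]
structure Strand (D : OrthDrawing G) where
  lo : V
  hi : V
  isStrand : lo = hi ∨ G.Adj lo hi ∧ D.row lo < D.row hi

namespace Strand

/-- A vertex as a strand. -/
def ofVertex (v : V) : D.Strand := ⟨v, v, Or.inl rfl⟩

/-- An edge between different rows as a strand. -/
def ofEdge {u v : V} (h : G.Adj u v) (huv : D.row u < D.row v) : D.Strand :=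
  ⟨u, v, Or.inr ⟨h, huv⟩⟩

instance [Finite V] : Finite D.Strand :=
  Finite.of_injective (fun s => (s.lo, s.hi)) fun _ _ h =>
    Strand.ext (congrArg Prod.fst h) (congrArg Prod.snd h)

/-- The vertices to which a strand is attached. -/
def ends (s : D.Strand) : Set V := {s.lo, s.hi}

/-- The rows that a strand meets. -/
def rows (s : D.Strand) : Set ℤ := Icc (D.row s.lo) (D.row s.hi)

/-- The gaps that a strand crosses, where `k` stands for the gap between rows `k` and `k + 1`. -/
def gaps (s : D.Strand) : Set ℤ := Ico (D.row s.lo) (D.row s.hi)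

/-- The points at which a strand meets row `k`, the boxes of its ends included. -/
def onRow (s : D.Strand) (k : ℤ) : Set ℝ := slice (D.ink s.lo s.hi) k

lemma row_lo_le_row_hi (s : D.Strand) : D.row s.lo ≤ D.row s.hi :=
  s.isStrand.elim (fun h => h ▸ le_rfl) fun h => h.2.le

lemma row_mem_rows {s : D.Strand} {w : V} (hw : w ∈ s.ends) : D.row w ∈ s.rows := by
  rcases hw with rfl | rfl
  · exact left_mem_Icc.2 s.row_lo_le_row_hi
  · exact right_mem_Icc.2 s.row_lo_le_row_hi

lemma adj_of_mem_gaps {s : D.Strand} {k : ℤ} (hk : k ∈ s.gaps) : G.Adj s.lo s.hi := by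
  refine s.isStrand.elim (fun h => ?_) And.left
  rw [gaps, h, Ico_self] at hk
  exact hk.elim

lemma eq_lo_of_mem_gaps {s : D.Strand} {w : V} (hw : w ∈ s.ends) (hk : D.row w ∈ s.gaps) :
    w = s.lo :=
  hw.resolve_right fun h => (h ▸ hk.2).false

lemma eq_of_sym2_eq {s t : D.Strand} (h : s(s.lo, s.hi) = s(t.lo, t.hi)) : s = t := by
  rcases Sym2.eq_iff.1 h with ⟨hlo, hhi⟩ | ⟨hlo, hhi⟩
  · exact Strand.ext hlo hhi
  · have hs := s.isStrand
    have ht := t.row_lo_le_row_hi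
    rw [← hlo, ← hhi] at ht
    have hs : s.lo = s.hi := hs.resolve_right fun h => (h.2.trans_le ht).false
    exact Strand.ext (hs.trans hhi) (hs.symm.trans hlo)

lemma exists_common_end (hpl : D.IsPlanar) {s t : D.Strand} (hst : s ≠ t) {p : Pt}
    (hs : p ∈ D.ink s.lo s.hi) (ht : p ∈ D.ink t.lo t.hi) :
    ∃ w ∈ s.ends, w ∈ t.ends ∧ p ∈ (D.box w).pts :=
  hpl.exists_end_of_mem_inks (fun h => hst (eq_of_sym2_eq h)) hs ht

lemma ordConnected_onRow (hpl : D.IsPlanar) (hflat : D.IsFlat) (hmono : D.IsYMonotone)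
    (hrow : D.HasIntRows) (s : D.Strand) (k : ℤ) : (s.onRow k).OrdConnected := by
  refine IsPreconnected.ordConnected <|
    isPreconnected_slice_ink hpl hflat hmono (s.isStrand.imp_right fun h => ?_) k
  rw [← cast_row hrow, ← cast_row hrow, Int.cast_le]
  exact ⟨h.1, h.2.le⟩

/-- The x-coordinate of a vertical segment with which a strand crosses gap `k`; a junk value if
the strand does not cross this gap. -/
noncomputable def column (s : D.Strand) (k : ℤ) : ℝ :=
  Classical.epsilon fun x => ∀ t ∈ Icc (k : ℝ) (k + 1), (x, t) ∈ D.curve s.lo s.hi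

lemma column_mem_curve (hpl : D.IsPlanar) (hflat : D.IsFlat) (hrow : D.HasIntRows)
    {s : D.Strand} {k : ℤ} (hk : k ∈ s.gaps) {t : ℝ} (ht : t ∈ Icc (k : ℝ) (k + 1)) :
    (s.column k, t) ∈ D.curve s.lo s.hi :=
  Classical.epsilon_spec (exists_column hpl hflat hrow (adj_of_mem_gaps hk) hk) t ht

lemma column_mem_onRow (hpl : D.IsPlanar) (hflat : D.IsFlat) (hrow : D.HasIntRows)
    {s : D.Strand} {k : ℤ} (hk : k ∈ s.gaps) : s.column k ∈ s.onRow k :=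
  curve_subset_ink (adj_of_mem_gaps hk) <|
    column_mem_curve hpl hflat hrow hk (left_mem_Icc.2 (by linarith))

lemma column_mem_onRow_succ (hpl : D.IsPlanar) (hflat : D.IsFlat) (hrow : D.HasIntRows)
    {s : D.Strand} {k : ℤ} (hk : k ∈ s.gaps) : s.column k ∈ s.onRow (k + 1) := by
  refine curve_subset_ink (adj_of_mem_gaps hk) ?_
  push_cast
  exact column_mem_curve hpl hflat hrow hk (right_mem_Icc.2 (by linarith))

lemma column_ne (hpl : D.IsPlanar) (hflat : D.IsFlat) (hrow : D.HasIntRows) {s t : D.Strand}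
    (hst : s ≠ t) {k : ℤ} (hs : k ∈ s.gaps) (ht : k ∈ t.gaps) : s.column k ≠ t.column k := by
  intro h
  -- no box meets the line half-way between two rows
  have hmid : (k + 1 / 2 : ℝ) ∈ Icc (k : ℝ) (k + 1) := ⟨by linarith, by linarith⟩
  obtain ⟨w, -, -, hw⟩ := exists_common_end hpl hst
    (curve_subset_ink (adj_of_mem_gaps hs) (column_mem_curve hpl hflat hrow hs hmid))
    (h ▸ curve_subset_ink (adj_of_mem_gaps ht) (column_mem_curve hpl hflat hrow ht hmid))
  have heq : (k + 1 / 2 : ℝ) = D.row w := ((mem_box_iff hflat).1 hw).2.trans (cast_row hrow w).symm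
  have h2 : 2 * k + 1 = 2 * D.row w := by
    rify
    linarith
  omega

/-- A point of a strand on row `k`: the left end of the box of an end on this row if there is
one, and otherwise a point of the edge. Strands that meet on a row have the same anchor there. -/
noncomputable def anchor (s : D.Strand) (k : ℤ) : ℝ :=
  if D.row s.lo = k then (D.box s.lo).x1
  else if D.row s.hi = k then (D.box s.hi).x1
  else s.column k

lemma anchor_row {s : D.Strand} {w : V} (hw : w ∈ s.ends) :
    s.anchor (D.row w) = (D.box w).x1 := by
  rcases hw with rfl | rfl
  · exact if_pos rfl
  · rcases s.isStrand with h | h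
    · rw [anchor, if_pos (by rw [h]), h]
    · rw [anchor, if_neg h.2.ne, if_pos rfl]

lemma anchor_mem_onRow (hpl : D.IsPlanar) (hflat : D.IsFlat) (hrow : D.HasIntRows)
    {s : D.Strand} {k : ℤ} (hk : k ∈ s.rows) : s.anchor k ∈ s.onRow k := by
  by_cases h : ∃ w ∈ s.ends, D.row w = k
  · obtain ⟨w, hw, rfl⟩ := h
    rw [anchor_row hw, onRow, cast_row hrow]
    exact box_subset_ink hw (left_end_mem_box hflat w)
  · have hlo : D.row s.lo ≠ k := fun hk => h ⟨_, Or.inl rfl, hk⟩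
    have hhi : D.row s.hi ≠ k := fun hk => h ⟨_, Or.inr rfl, hk⟩
    rw [anchor, if_neg hlo, if_neg hhi]
    exact column_mem_onRow hpl hflat hrow ⟨hk.1, hk.2.lt_of_ne hhi.symm⟩

lemma exists_common_end_on_row (hpl : D.IsPlanar) (hflat : D.IsFlat) (hrow : D.HasIntRows)
    {s t : D.Strand} (hst : s ≠ t) {k : ℤ} {x : ℝ} (hs : x ∈ s.onRow k) (ht : x ∈ t.onRow k) :
    ∃ w ∈ s.ends, w ∈ t.ends ∧ D.row w = k :=
  let ⟨w, hws, hwt, hw⟩ := exists_common_end hpl hst hs ht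
  ⟨w, hws, hwt, ((mem_box_row_iff hflat hrow).1 hw).2⟩

lemma anchor_eq_of_mem_onRow (hpl : D.IsPlanar) (hflat : D.IsFlat) (hrow : D.HasIntRows)
    {s t : D.Strand} {k : ℤ} {x : ℝ} (hs : x ∈ s.onRow k) (ht : x ∈ t.onRow k) :
    s.anchor k = t.anchor k := by
  by_cases hst : s = t
  · rw [hst]
  obtain ⟨w, hws, hwt, rfl⟩ := exists_common_end_on_row hpl hflat hrow hst hs ht
  rw [anchor_row hws, anchor_row hwt]

lemma lt_of_anchor_lt (hpl : D.IsPlanar) (hflat : D.IsFlat) (hmono : D.IsYMonotone)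
    (hrow : D.HasIntRows) {s t : D.Strand} {k : ℤ} (hs : k ∈ s.rows) (ht : k ∈ t.rows)
    (h : s.anchor k < t.anchor k) {x y : ℝ} (hx : x ∈ s.onRow k) (hy : y ∈ t.onRow k) : x < y :=
  lt_of_ordConnected_of_disjoint (ordConnected_onRow hpl hflat hmono hrow s k)
    (ordConnected_onRow hpl hflat hmono hrow t k)
    (disjoint_left.2 fun _ hs ht => h.ne (anchor_eq_of_mem_onRow hpl hflat hrow hs ht))
    (anchor_mem_onRow hpl hflat hrow hs) (anchor_mem_onRow hpl hflat hrow ht) h hx hy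

/-- Orders the strands on row `k` by their anchors, and the strands that leave the same vertex
upwards by the columns with which they leave it. -/
noncomputable def key (s : D.Strand) (k : ℤ) : ℝ ×ₗ ℝ :=
  toLex (s.anchor k, if D.row s.lo = k then s.column k else 0)

lemma key_lt_of_anchor_lt {s t : D.Strand} {k : ℤ} (h : s.anchor k < t.anchor k) :
    s.key k < t.key k :=
  Prod.Lex.toLex_lt_toLex.2 (Or.inl h)

lemma key_lt_of_column_lt (hpl : D.IsPlanar) (hflat : D.IsFlat) (hmono : D.IsYMonotone)
    (hrow : D.HasIntRows) {s t : D.Strand} {k : ℤ} (hs : k ∈ s.gaps) (ht : k ∈ t.gaps)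
    (h : s.column k < t.column k) : s.key k < t.key k := by
  have hs' := Ico_subset_Icc_self hs
  have ht' := Ico_subset_Icc_self ht
  rcases lt_trichotomy (s.anchor k) (t.anchor k) with hlt | heq | hgt
  · exact key_lt_of_anchor_lt hlt
  · have hst : s ≠ t := fun hst => (hst ▸ h).false
    obtain ⟨w, hws, hwt, rfl⟩ := exists_common_end_on_row hpl hflat hrow hst
      (anchor_mem_onRow hpl hflat hrow hs') (heq ▸ anchor_mem_onRow hpl hflat hrow ht')
    refine Prod.Lex.toLex_lt_toLex.2 (Or.inr ⟨heq, ?_⟩)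
    rwa [← eq_lo_of_mem_gaps hws hs, ← eq_lo_of_mem_gaps hwt ht, if_pos rfl, if_pos rfl]
  · exact absurd h (lt_of_anchor_lt hpl hflat hmono hrow ht' hs' hgt
      (column_mem_onRow hpl hflat hrow ht) (column_mem_onRow hpl hflat hrow hs)).not_gt

lemma key_lt_of_key_succ_lt (hpl : D.IsPlanar) (hflat : D.IsFlat) (hmono : D.IsYMonotone)
    (hrow : D.HasIntRows) {s t : D.Strand} {k : ℤ} (hs : k ∈ s.gaps) (ht : k ∈ t.gaps)
    (h : s.key (k + 1) < t.key (k + 1)) : s.key k < t.key k := by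
  have hanchor : s.anchor (k + 1) < t.anchor (k + 1) := by
    rw [key, key, if_neg (by have := hs.1; omega), if_neg (by have := ht.1; omega)] at h
    exact (Prod.Lex.toLex_lt_toLex.1 h).resolve_right fun h => h.2.false
  exact key_lt_of_column_lt hpl hflat hmono hrow hs ht <|
    lt_of_anchor_lt hpl hflat hmono hrow ⟨by have := hs.1; omega, hs.2⟩
      ⟨by have := ht.1; omega, ht.2⟩ hanchor
      (column_mem_onRow_succ hpl hflat hrow hs) (column_mem_onRow_succ hpl hflat hrow ht)

lemma mem_ends_of_anchor_mem_Icc (hpl : D.IsPlanar) (hflat : D.IsFlat) (hmono : D.IsYMonotone)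
    (hrow : D.HasIntRows) {u v : V} (h : G.Adj u v) (huv : D.row u = D.row v) {s : D.Strand}
    (hs : D.row u ∈ s.rows) (hmem : s.anchor (D.row u) ∈ Icc (D.box u).x1 (D.box v).x1) :
    u ∈ s.ends ∨ v ∈ s.ends := by
  by_cases hu : u ∈ s.ends
  · exact Or.inl hu
  have hne : s(u, v) ≠ s(s.lo, s.hi) := fun heq =>
    hu (Sym2.mem_iff.1 (heq ▸ Sym2.mem_mk_left u v))
  have hy := (row_eq_row_iff hrow).1 huv
  have hord : (slice (D.ink u v) (D.row u)).OrdConnected :=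
    (isPreconnected_slice_ink hpl hflat hmono (Or.inr ⟨h, hy.le⟩) _).ordConnected
  have hleft : ∀ w ∈ ({u, v} : Set V), (D.box w).x1 ∈ slice (D.ink u v) (D.row u) := by
    intro w hw
    have hwu : D.row w = D.row u := by
      rcases hw with rfl | rfl
      · rfl
      · exact huv.symm
    rw [← hwu, cast_row hrow]
    exact box_subset_ink hw (left_end_mem_box hflat w)
  obtain ⟨w, hw, hws, -⟩ := hpl.exists_end_of_mem_inks hne
    (hord.out (hleft u (Or.inl rfl)) (hleft v (Or.inr rfl)) hmem)
    (anchor_mem_onRow hpl hflat hrow hs)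
  rcases hw with rfl | rfl
  · exact Or.inl hws
  · exact Or.inr hws

end Strand

/-- A left-to-right order of all strands that refines the order in every row and separates the
strands crossing a common gap. -/
structure StrandOrder (D : OrthDrawing G) where
  rank : D.Strand → ℤ
  rank_lt_rank : ∀ {s t : D.Strand} {k : ℤ}, k ∈ s.rows → k ∈ t.rows →
    s.anchor k < t.anchor k → rank s < rank t
  rank_ne_rank : ∀ {s t : D.Strand} {k : ℤ}, s ≠ t → k ∈ s.gaps → k ∈ t.gaps → rank s ≠ rank t

theorem nonempty_strandOrder [Finite V] (hpl : D.IsPlanar) (hflat : D.IsFlat)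
    (hmono : D.IsYMonotone) (hrow : D.HasIntRows) : Nonempty D.StrandOrder := by
  obtain ⟨rank, hrank⟩ := exists_rank_of_sweep (fun s : D.Strand => D.row s.lo)
    (fun s => D.row s.hi) Strand.key
    fun s t k hs ht => Strand.key_lt_of_key_succ_lt hpl hflat hmono hrow hs ht
  have rank_lt_of_column_lt {s t : D.Strand} {k : ℤ} (hs : k ∈ s.gaps) (ht : k ∈ t.gaps)
      (h : s.column k < t.column k) : rank s < rank t :=
    hrank s t k (Ico_subset_Icc_self hs) (Ico_subset_Icc_self ht)
      (Strand.key_lt_of_column_lt hpl hflat hmono hrow hs ht h)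
  refine ⟨rank, fun hs ht h => hrank _ _ _ hs ht (Strand.key_lt_of_anchor_lt h),
    fun hst hs ht => ?_⟩
  rcases (Strand.column_ne hpl hflat hrow hst hs ht).lt_or_gt with h | h
  · exact (rank_lt_of_column_lt hs ht h).ne
  · exact (rank_lt_of_column_lt ht hs h).ne'

end OrthDrawing

/-! ### Visibility layouts -/

/-- The coordinates of a flat visibility representation: vertex `v` is the segment from `left v`
to `right v` on `row v`, an edge `uv` with `row u < row v` is the vertical segment at `col u v`,
and an edge within a row joins the facing ends of its two vertices. The values of `col` at other
pairs are junk. -/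
structure VisibilityLayout {V : Type*} (G : SimpleGraph V) where
  row : V → ℝ
  left : V → ℝ
  right : V → ℝ
  col : V → V → ℝ
  left_le_right (v : V) : left v ≤ right v
  box_disjoint {u v : V} : u ≠ v → row u = row v → right u < left v ∨ right v < left u
  col_mem {u v : V} : G.Adj u v → row u < row v →
    col u v ∈ Icc (left u) (right u) ∧ col u v ∈ Icc (left v) (right v)
  col_avoid {u v w : V} : G.Adj u v → row u < row w → row w < row v →
    col u v ∉ Icc (left w) (right w)
  col_ne {u v a b : V} : G.Adj u v → G.Adj a b → row u < row v → row a < row b →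
    (u, v) ≠ (a, b) → row u < row b → row a < row v → col u v ≠ col a b
  right_lt_left_avoid {u v w : V} : G.Adj u v → row u = row v → row w = row u →
    ¬(right u < left w ∧ right w < left v)
  right_lt_col_avoid {u v a b : V} : G.Adj u v → row u = row v → G.Adj a b → row a < row u →
    row u < row b → ¬(right u < col a b ∧ col a b < left v)

namespace VisibilityLayout

variable {V : Type*} {G : SimpleGraph V} (L : VisibilityLayout G)

/-- The x-coordinate at which the edge `uv` is attached to `u`. -/
noncomputable def attach (u v : V) : ℝ :=
  if L.row u < L.row v then L.col u v
  else if L.row v < L.row u then L.col v u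
  else if L.right u < L.left v then L.right u
  else L.left u

/-- The point at which the edge `uv` is attached to `u`. -/
noncomputable def port (u v : V) : Pt := (L.attach u v, L.row u)

/-- The drawing with the coordinates of a layout. -/
noncomputable def toDrawing : OrthDrawing G where
  box v := ⟨L.left v, L.right v, L.row v, L.row v, L.left_le_right v, le_rfl⟩
  chain u v := [L.port u v, L.port v u]
  chain_symm _ _ := rfl

/-- The edge `uv`, directed from `u` to `v`, runs upwards or, within a row, to the right. -/
def IsForward (u v : V) : Prop :=
  L.row u < L.row v ∨ L.row u = L.row v ∧ L.right u < L.left v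

variable {L} {u v w a b : V} {z : Pt}

lemma isForward_or_isForward (h : u ≠ v) : L.IsForward u v ∨ L.IsForward v u := by
  rcases lt_trichotomy (L.row u) (L.row v) with hlt | heq | hgt
  · exact Or.inl (Or.inl hlt)
  · exact (L.box_disjoint h heq).imp (fun h => Or.inr ⟨heq, h⟩) fun h => Or.inr ⟨heq.symm, h⟩
  · exact Or.inr (Or.inl hgt)

lemma port_of_row_lt (h : L.row u < L.row v) :
    L.port u v = (L.col u v, L.row u) ∧ L.port v u = (L.col u v, L.row v) := by
  simp only [port, attach, if_pos h, if_neg h.not_gt, and_self]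

lemma port_of_right_lt_left (h : L.row u = L.row v) (hlt : L.right u < L.left v) :
    L.port u v = (L.right u, L.row u) ∧ L.port v u = (L.left v, L.row v) := by
  have hnlt : ¬L.right v < L.left u := by linarith [L.left_le_right u, L.left_le_right v]
  simp only [port, attach, h, lt_irrefl, if_false, if_pos hlt, if_neg hnlt, and_self]

lemma mem_box_iff : z ∈ (L.toDrawing.box v).pts ↔
    z.1 ∈ Icc (L.left v) (L.right v) ∧ z.2 = L.row v := by
  rw [toDrawing, Box.pts, mem_prod, Icc_self, mem_singleton_iff]

lemma curve_comm (u v : V) : L.toDrawing.curve u v = L.toDrawing.curve v u := by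
  simp only [OrthDrawing.curve, toDrawing, chainSet_pair, segment_symm]

lemma mem_curve_iff_of_row_lt (h : L.row u < L.row v) :
    z ∈ L.toDrawing.curve u v ↔ z.1 = L.col u v ∧ z.2 ∈ Icc (L.row u) (L.row v) := by
  rw [OrthDrawing.curve, toDrawing, chainSet_pair, (port_of_row_lt h).1, (port_of_row_lt h).2,
    ← uIcc_of_le h.le]
  exact mem_segment_of_fst_eq rfl

lemma mem_curve_iff_of_right_lt_left (h : L.row u = L.row v) (hlt : L.right u < L.left v) :
    z ∈ L.toDrawing.curve u v ↔ z.2 = L.row u ∧ z.1 ∈ Icc (L.right u) (L.left v) := by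
  rw [OrthDrawing.curve, toDrawing, chainSet_pair, (port_of_right_lt_left h hlt).1,
    (port_of_right_lt_left h hlt).2, mem_segment_of_snd_eq h, uIcc_of_le hlt.le]

lemma eq_of_mem_box (hu : z ∈ (L.toDrawing.box u).pts) (hv : z ∈ (L.toDrawing.box v).pts) :
    u = v := by
  obtain ⟨⟨hlu, hru⟩, hyu⟩ := mem_box_iff.1 hu
  obtain ⟨⟨hlv, hrv⟩, hyv⟩ := mem_box_iff.1 hv
  by_contra huv
  rcases L.box_disjoint huv (hyu.symm.trans hyv) with h | h <;> linarith

lemma IsForward.port_mem_box (hf : L.IsForward u v) (h : G.Adj u v) :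
    L.port u v ∈ (L.toDrawing.box u).pts ∧ L.port v u ∈ (L.toDrawing.box v).pts := by
  rw [mem_box_iff, mem_box_iff]
  rcases hf with hlt | ⟨heq, hlt⟩
  · rw [(port_of_row_lt hlt).1, (port_of_row_lt hlt).2]
    exact ⟨⟨(L.col_mem h hlt).1, rfl⟩, (L.col_mem h hlt).2, rfl⟩
  · rw [(port_of_right_lt_left heq hlt).1, (port_of_right_lt_left heq hlt).2]
    exact ⟨⟨right_mem_Icc.2 (L.left_le_right u), rfl⟩, left_mem_Icc.2 (L.left_le_right v), rfl⟩

lemma port_mem_box (h : G.Adj u v) : L.port u v ∈ (L.toDrawing.box u).pts :=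
  (isForward_or_isForward h.ne).elim (fun hf => (hf.port_mem_box h).1)
    fun hf => (hf.port_mem_box h.symm).2

lemma port_ne_port (h : G.Adj u v) : L.port u v ≠ L.port v u := fun heq =>
  h.ne (eq_of_mem_box (port_mem_box h) (heq ▸ port_mem_box h.symm))

lemma IsForward.eq_port_of_mem_box (hf : L.IsForward u v) (h : G.Adj u v)
    (hz : z ∈ L.toDrawing.curve u v) (hw : z ∈ (L.toDrawing.box w).pts) :
    w = u ∧ z = L.port u v ∨ w = v ∧ z = L.port v u := by
  obtain ⟨hzw, hyw⟩ := mem_box_iff.1 hw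
  rcases hf with hlt | ⟨heq, hlt⟩
  · obtain ⟨hx, hyu, hyv⟩ := (mem_curve_iff_of_row_lt hlt).1 hz
    rcases hyu.eq_or_lt with hyu | hyu
    · obtain rfl : z = L.port u v := (port_of_row_lt hlt).1 ▸ Prod.ext hx hyu.symm
      exact Or.inl ⟨eq_of_mem_box hw (VisibilityLayout.port_mem_box h), rfl⟩
    rcases hyv.eq_or_lt with hyv | hyv
    · obtain rfl : z = L.port v u := (port_of_row_lt hlt).2 ▸ Prod.ext hx hyv
      exact Or.inr ⟨eq_of_mem_box hw (VisibilityLayout.port_mem_box h.symm), rfl⟩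
    · exact absurd (hx ▸ hzw) (L.col_avoid h (hyw ▸ hyu) (hyw ▸ hyv))
  · obtain ⟨hy, hxu, hxv⟩ := (mem_curve_iff_of_right_lt_left heq hlt).1 hz
    by_cases hwu : w = u
    · subst hwu
      exact Or.inl ⟨rfl, (port_of_right_lt_left heq hlt).1 ▸ Prod.ext (hzw.2.antisymm hxu) hy⟩
    by_cases hwv : w = v
    · subst hwv
      exact Or.inr ⟨rfl, (port_of_right_lt_left heq hlt).2 ▸ Prod.ext (hxv.antisymm hzw.1) hyw⟩
    have hwu_row : L.row w = L.row u := hyw.symm.trans hy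
    have hleft : L.right u < L.left w :=
      (L.box_disjoint hwu hwu_row).resolve_left fun h => by linarith [L.left_le_right u, hzw.2]
    have hright : L.right w < L.left v :=
      (L.box_disjoint hwv (hwu_row.trans heq)).resolve_right fun h => by
        linarith [L.left_le_right v, hzw.1]
    exact absurd ⟨hleft, hright⟩ (L.right_lt_left_avoid h heq hwu_row)

lemma eq_port_of_mem_box (h : G.Adj u v) (hz : z ∈ L.toDrawing.curve u v)
    (hw : z ∈ (L.toDrawing.box w).pts) : w = u ∧ z = L.port u v ∨ w = v ∧ z = L.port v u := by
  rcases isForward_or_isForward h.ne with hf | hf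
  · exact hf.eq_port_of_mem_box h hz hw
  · exact (hf.eq_port_of_mem_box h.symm (curve_comm u v ▸ hz) hw).symm

lemma exists_box_of_mem_up_of_mem_up (h : G.Adj u v) (h' : G.Adj a b) (hne : (u, v) ≠ (a, b))
    (huv : L.row u < L.row v) (hab : L.row a < L.row b) (hz : z ∈ L.toDrawing.curve u v)
    (hz' : z ∈ L.toDrawing.curve a b) : ∃ w, z ∈ (L.toDrawing.box w).pts := by
  obtain ⟨hx, hyu, hyv⟩ := (mem_curve_iff_of_row_lt huv).1 hz
  obtain ⟨hx', hya, hyb⟩ := (mem_curve_iff_of_row_lt hab).1 hz'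
  rcases le_or_gt (L.row b) (L.row u) with hbu | hub
  · exact ⟨u, mem_box_iff.2 ⟨hx ▸ (L.col_mem h huv).1, (hyb.trans hbu).antisymm hyu⟩⟩
  rcases le_or_gt (L.row v) (L.row a) with hva | hav
  · exact ⟨v, mem_box_iff.2 ⟨hx ▸ (L.col_mem h huv).2, hyv.antisymm (hva.trans hya)⟩⟩
  · exact absurd (hx.symm.trans hx') (L.col_ne h h' huv hab hne hub hav)

lemma exists_box_of_mem_up_of_mem_right (h : G.Adj u v) (h' : G.Adj a b)
    (huv : L.row u < L.row v) (hab : L.row a = L.row b) (hlt : L.right a < L.left b)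
    (hz : z ∈ L.toDrawing.curve u v) (hz' : z ∈ L.toDrawing.curve a b) :
    ∃ w, z ∈ (L.toDrawing.box w).pts := by
  obtain ⟨hx, hyu, hyv⟩ := (mem_curve_iff_of_row_lt huv).1 hz
  obtain ⟨hy, hxa, hxb⟩ := (mem_curve_iff_of_right_lt_left hab hlt).1 hz'
  rcases hyu.eq_or_lt with hyu | hyu
  · exact ⟨u, mem_box_iff.2 ⟨hx ▸ (L.col_mem h huv).1, hyu.symm⟩⟩
  rcases hyv.eq_or_lt with hyv | hyv
  · exact ⟨v, mem_box_iff.2 ⟨hx ▸ (L.col_mem h huv).2, hyv⟩⟩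
  rcases hxa.eq_or_lt with hxa | hxa
  · exact ⟨a, mem_box_iff.2 ⟨⟨hxa ▸ L.left_le_right a, hxa.ge⟩, hy⟩⟩
  rcases hxb.eq_or_lt with hxb | hxb
  · exact ⟨b, mem_box_iff.2 ⟨⟨hxb.ge, hxb ▸ L.left_le_right b⟩, hy.trans hab⟩⟩
  · exact absurd ⟨hx ▸ hxa, hx ▸ hxb⟩ (L.right_lt_col_avoid h' hab h (hy ▸ hyu) (hy ▸ hyv))

lemma exists_box_of_mem_right_of_mem_right (h : G.Adj u v) (h' : G.Adj a b)
    (hne : (u, v) ≠ (a, b)) (huv : L.row u = L.row v) (hlt : L.right u < L.left v)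
    (hab : L.row a = L.row b) (hlt' : L.right a < L.left b) (hz : z ∈ L.toDrawing.curve u v)
    (hz' : z ∈ L.toDrawing.curve a b) : ∃ w, z ∈ (L.toDrawing.box w).pts := by
  obtain ⟨hy, hxu, hxv⟩ := (mem_curve_iff_of_right_lt_left huv hlt).1 hz
  obtain ⟨hy', hxa, hxb⟩ := (mem_curve_iff_of_right_lt_left hab hlt').1 hz'
  have hua : L.row u = L.row a := hy.symm.trans hy'
  by_cases heq : u = a
  · subst heq
    -- the nearer of the two right ends would lie on the edge to the farther one
    have hvb : v ≠ b := fun hvb => hne (hvb ▸ rfl)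
    rcases L.box_disjoint hvb (huv.symm.trans hab) with hlt'' | hlt''
    · exact absurd ⟨hlt, hlt''⟩ (L.right_lt_left_avoid h' hab huv.symm)
    · exact absurd ⟨hlt', hlt''⟩ (L.right_lt_left_avoid h huv hab.symm)
  rcases L.box_disjoint heq hua with hlt'' | hlt''
  · have hva : L.left v ≤ L.right a := not_lt.1 fun hav =>
      L.right_lt_left_avoid h huv hua.symm ⟨hlt'', hav⟩
    exact ⟨v, mem_box_iff.2
      ⟨⟨hva.trans hxa, hxv.trans (L.left_le_right v)⟩, hy.trans huv⟩⟩
  · have hbu : L.left b ≤ L.right u := not_lt.1 fun hub =>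
      L.right_lt_left_avoid h' hab hua ⟨hlt'', hub⟩
    exact ⟨b, mem_box_iff.2
      ⟨⟨hbu.trans hxu, hxb.trans (L.left_le_right b)⟩, hy'.trans hab⟩⟩

lemma IsForward.exists_box_of_mem_curves (hf : L.IsForward u v) (hf' : L.IsForward a b)
    (h : G.Adj u v) (h' : G.Adj a b) (hne : s(u, v) ≠ s(a, b))
    (hz : z ∈ L.toDrawing.curve u v) (hz' : z ∈ L.toDrawing.curve a b) :
    ∃ w, z ∈ (L.toDrawing.box w).pts := by
  have hne' : (u, v) ≠ (a, b) := fun heq => hne (Sym2.mk_eq_mk_iff.2 (Or.inl heq))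
  rcases hf with hlt | ⟨heq, hlt⟩ <;> rcases hf' with hlt' | ⟨heq', hlt'⟩
  · exact exists_box_of_mem_up_of_mem_up h h' hne' hlt hlt' hz hz'
  · exact exists_box_of_mem_up_of_mem_right h h' hlt heq' hlt' hz hz'
  · exact exists_box_of_mem_up_of_mem_right h' h hlt' heq hlt hz' hz
  · exact exists_box_of_mem_right_of_mem_right h h' hne' heq hlt heq' hlt' hz hz'

lemma exists_box_of_mem_curves (h : G.Adj u v) (h' : G.Adj a b) (hne : s(u, v) ≠ s(a, b))
    (hz : z ∈ L.toDrawing.curve u v) (hz' : z ∈ L.toDrawing.curve a b) :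
    ∃ w, z ∈ (L.toDrawing.box w).pts := by
  wlog hf : L.IsForward u v generalizing u v
  · exact this h.symm (Sym2.eq_swap ▸ hne) (curve_comm u v ▸ hz)
      ((isForward_or_isForward h.ne).resolve_left hf)
  wlog hf' : L.IsForward a b generalizing a b
  · exact this h'.symm (curve_comm a b ▸ hz') (by rwa [Sym2.eq_swap (a := b)])
      ((isForward_or_isForward h'.ne).resolve_left hf')
  exact hf.exists_box_of_mem_curves hf' h h' hne hz hz'

lemma isOrthoChain_chain (u v : V) : IsOrthoChain (L.toDrawing.chain u v) := by
  refine isOrthoChain_pair ?_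
  rcases lt_trichotomy (L.row u) (L.row v) with h | h | h
  · left; rw [(port_of_row_lt h).1, (port_of_row_lt h).2]
  · exact Or.inr h
  · left; rw [(port_of_row_lt h).1, (port_of_row_lt h).2]

variable (L)

lemma isPlanar_toDrawing : L.toDrawing.IsPlanar := by
  refine ⟨fun u v huv => disjoint_left.2 fun z hu hv => huv (eq_of_mem_box hu hv),
    fun u v h => ⟨isSimpleChain_pair (port_ne_port h), isOrthoChain_chain u v,
      genuineBends_pair _ _⟩,
    fun u v h => ⟨_, _, [], rfl, port_mem_box h, port_mem_box h.symm⟩,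
    fun u v w h z ⟨hz, hw⟩ => ?_, fun u v a b h h' hne z ⟨hz, hz'⟩ => ?_⟩
  · exact (eq_port_of_mem_box h hz hw).imp (And.imp_right (congrArg some ·.symm))
      (And.imp_right (congrArg some ·.symm))
  · obtain ⟨w, hw⟩ := exists_box_of_mem_curves h h' hne hz hz'
    exact ⟨(eq_port_of_mem_box h hz hw).imp (congrArg some ·.2.symm) (congrArg some ·.2.symm),
      (eq_port_of_mem_box h' hz' hw).imp (congrArg some ·.2.symm) (congrArg some ·.2.symm)⟩

lemma isFlat_toDrawing : L.toDrawing.IsFlat := fun _ => rfl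

lemma isVR_toDrawing : L.toDrawing.IsVR := fun _ _ _ => rfl

lemma isYMonotone_toDrawing : L.toDrawing.IsYMonotone := fun _ _ _ =>
  isMonoChain_pair _ _

lemma intCoords_toDrawing (hrow : ∀ v, ∃ b : ℤ, L.row v = b)
    (hleft : ∀ v, ∃ a : ℤ, L.left v = a) (hright : ∀ v, ∃ a : ℤ, L.right v = a)
    (hcol : ∀ u v, ∃ a : ℤ, L.col u v = a) : L.toDrawing.IntCoords := by
  have hport (u v : V) : IsIntPt (L.port u v) := by
    refine ⟨?_, hrow u⟩
    simp only [port, attach]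
    split_ifs
    exacts [hcol u v, hcol v u, hright u, hleft u]
  intro p hp
  simp only [OrthDrawing.points, mem_union, mem_iUnion, exists_prop] at hp
  rcases hp with ⟨v, rfl | rfl | rfl | rfl⟩ | ⟨u, v, -, hp⟩
  · exact ⟨hleft v, hrow v⟩
  · exact ⟨hleft v, hrow v⟩
  · exact ⟨hright v, hrow v⟩
  · exact ⟨hright v, hrow v⟩
  · obtain rfl | rfl : p = L.port u v ∨ p = L.port v u := by simpa [toDrawing] using hp
    exacts [hport u v, hport v u]

end VisibilityLayout

/-! ### The layout of a strand order -/

namespace OrthDrawing.StrandOrder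

variable {V : Type*} {G : SimpleGraph V} {D : OrthDrawing G} (R : D.StrandOrder)

/-- The ranks of the strands attached to a vertex, itself included; the new box of the vertex
spans them. -/
def ranksAt (v : V) : Set ℤ := R.rank '' {s | v ∈ s.ends}

/-- The left end of the new box of a vertex. -/
noncomputable def left (v : V) : ℤ := sInf (R.ranksAt v)

/-- The right end of the new box of a vertex. -/
noncomputable def right (v : V) : ℤ := sSup (R.ranksAt v)

open Classical in
/-- The new x-coordinate of an edge from a row to a higher one; `0` for all other pairs. -/
noncomputable def col (u v : V) : ℤ :=
  if h : G.Adj u v ∧ D.row u < D.row v then R.rank (.ofEdge h.1 h.2) else 0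

lemma col_eq_rank {u v : V} (h : G.Adj u v) (huv : D.row u < D.row v) :
    R.col u v = R.rank (.ofEdge h huv) :=
  dif_pos ⟨h, huv⟩

lemma col_ne {u v a b : V} (h : G.Adj u v) (h' : G.Adj a b) (huv : D.row u < D.row v)
    (hab : D.row a < D.row b) (hne : (u, v) ≠ (a, b)) (hub : D.row u < D.row b)
    (hav : D.row a < D.row v) : R.col u v ≠ R.col a b := by
  rw [R.col_eq_rank h huv, R.col_eq_rank h' hab]
  exact R.rank_ne_rank (k := max (D.row u) (D.row a))
    (fun heq => hne (Prod.ext (congrArg Strand.lo heq) (congrArg Strand.hi heq)))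
    ⟨le_max_left .., max_lt huv hav⟩ ⟨le_max_right .., max_lt hub hab⟩

lemma nonempty_ranksAt (v : V) : (R.ranksAt v).Nonempty :=
  ⟨_, Strand.ofVertex v, Or.inl rfl, rfl⟩

section Finite

variable [Finite V] {u v w : V} {s : D.Strand}

lemma finite_ranksAt (v : V) : (R.ranksAt v).Finite := (Set.toFinite _).image _

lemma rank_mem_Icc (hv : v ∈ s.ends) : R.rank s ∈ Icc (R.left v) (R.right v) :=
  ⟨csInf_le (R.finite_ranksAt v).bddBelow (mem_image_of_mem _ hv),
    le_csSup (R.finite_ranksAt v).bddAbove (mem_image_of_mem _ hv)⟩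

lemma left_le_right (v : V) : R.left v ≤ R.right v :=
  nonempty_Icc.1 ⟨_, R.rank_mem_Icc (s := .ofVertex v) (Or.inl rfl)⟩

lemma exists_rank_eq_left (v : V) : ∃ s : D.Strand, v ∈ s.ends ∧ R.rank s = R.left v :=
  (R.nonempty_ranksAt v).csInf_mem (R.finite_ranksAt v)

lemma exists_rank_eq_right (v : V) : ∃ s : D.Strand, v ∈ s.ends ∧ R.rank s = R.right v :=
  (R.nonempty_ranksAt v).csSup_mem (R.finite_ranksAt v)

lemma rank_lt_left (hs : D.row v ∈ s.rows) (h : s.anchor (D.row v) < (D.box v).x1) :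
    R.rank s < R.left v := by
  obtain ⟨t, ht, heq⟩ := R.exists_rank_eq_left v
  exact heq ▸ R.rank_lt_rank hs (Strand.row_mem_rows ht) (Strand.anchor_row ht ▸ h)

lemma right_lt_rank (hs : D.row v ∈ s.rows) (h : (D.box v).x1 < s.anchor (D.row v)) :
    R.right v < R.rank s := by
  obtain ⟨t, ht, heq⟩ := R.exists_rank_eq_right v
  exact heq ▸ R.rank_lt_rank (Strand.row_mem_rows ht) hs (Strand.anchor_row ht ▸ h)

lemma right_lt_left (huv : D.row u = D.row v) (h : (D.box u).x1 < (D.box v).x1) :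
    R.right u < R.left v := by
  obtain ⟨s, hs, heq⟩ := R.exists_rank_eq_right u
  refine heq ▸ R.rank_lt_left (huv ▸ Strand.row_mem_rows hs) ?_
  rwa [← huv, Strand.anchor_row hs]

lemma right_lt_left_or_right_lt_left (hpl : D.IsPlanar) (hflat : D.IsFlat)
    (hrow : D.HasIntRows) (hne : u ≠ v) (huv : D.row u = D.row v) :
    R.right u < R.left v ∨ R.right v < R.left u := by
  have hx : (D.box u).x1 ≠ (D.box v).x1 := fun hx => hne <| hpl.eq_of_mem_box
    (left_end_mem_box hflat u) <| by
      rw [hx, (row_eq_row_iff hrow).1 huv]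
      exact left_end_mem_box hflat v
  exact hx.lt_or_gt.imp (R.right_lt_left huv) (R.right_lt_left huv.symm)

lemma rank_notMem_Icc (hpl : D.IsPlanar) (hflat : D.IsFlat) (hrow : D.HasIntRows)
    (hw : w ∉ s.ends) (hs : D.row w ∈ s.rows) : R.rank s ∉ Icc (R.left w) (R.right w) := by
  intro hmem
  have hanchor : s.anchor (D.row w) = (D.box w).x1 :=
    le_antisymm (not_lt.1 fun h => (R.right_lt_rank hs h).not_ge hmem.2)
      (not_lt.1 fun h => (R.rank_lt_left hs h).not_ge hmem.1)
  have hp := Strand.anchor_mem_onRow hpl hflat hrow hs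
  rw [hanchor, Strand.onRow, cast_row hrow] at hp
  exact hw (hpl.mem_ends_of_mem_ink hp (left_end_mem_box hflat w))

lemma not_right_lt_rank_lt_left (hpl : D.IsPlanar) (hflat : D.IsFlat) (hmono : D.IsYMonotone)
    (hrow : D.HasIntRows) (h : G.Adj u v) (huv : D.row u = D.row v) (hs : D.row u ∈ s.rows) :
    ¬(R.right u < R.rank s ∧ R.rank s < R.left v) := by
  rintro ⟨hlt, hgt⟩
  have hleft : (D.box u).x1 ≤ s.anchor (D.row u) := not_lt.1 fun hx =>
    ((R.rank_lt_left hs hx).trans_le (R.left_le_right u)).not_gt hlt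
  have hright : s.anchor (D.row u) ≤ (D.box v).x1 := not_lt.1 fun hx =>
    ((R.left_le_right v).trans_lt (R.right_lt_rank (huv ▸ hs) (huv ▸ hx))).not_gt hgt
  rcases Strand.mem_ends_of_anchor_mem_Icc hpl hflat hmono hrow h huv hs ⟨hleft, hright⟩
    with hu | hv
  · exact hlt.not_ge (R.rank_mem_Icc hu).2
  · exact hgt.not_ge (R.rank_mem_Icc hv).1

/-- The visibility layout in which every strand is placed at its rank. -/
noncomputable def layout (hpl : D.IsPlanar) (hflat : D.IsFlat) (hmono : D.IsYMonotone)
    (hrow : D.HasIntRows) : VisibilityLayout G where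
  row v := D.row v
  left v := R.left v
  right v := R.right v
  col u v := R.col u v
  left_le_right v := by exact_mod_cast R.left_le_right v
  box_disjoint hne huv := by
    exact_mod_cast R.right_lt_left_or_right_lt_left hpl hflat hrow hne (Int.cast_inj.1 huv)
  col_mem h huv := by
    rw [R.col_eq_rank h (Int.cast_lt.1 huv)]
    simp only [mem_Icc, Int.cast_le]
    exact ⟨R.rank_mem_Icc (Or.inl rfl), R.rank_mem_Icc (Or.inr rfl)⟩
  col_avoid h huw hwv := by
    rw [Int.cast_lt] at huw hwv
    rw [R.col_eq_rank h (huw.trans hwv)]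
    simp only [mem_Icc, Int.cast_le]
    exact R.rank_notMem_Icc hpl hflat hrow (s := .ofEdge h (huw.trans hwv))
      (by rintro (rfl | rfl); exacts [huw.false, hwv.false]) ⟨huw.le, hwv.le⟩
  col_ne h h' huv hab hne hub hav := by
    rw [Int.cast_lt] at huv hab hub hav
    exact_mod_cast R.col_ne h h' huv hab hne hub hav
  right_lt_left_avoid {u v w} h huv hwu := by
    rw [Int.cast_inj] at huv hwu
    have hw := R.rank_mem_Icc (s := .ofVertex w) (Or.inl rfl)
    have := R.not_right_lt_rank_lt_left hpl hflat hmono hrow h huv (s := .ofVertex w)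
      (hwu ▸ Strand.row_mem_rows (Or.inl rfl))
    simp only [Int.cast_lt]
    exact fun hlt => this (hlt.imp hw.1.trans_lt' hw.2.trans_lt)
  right_lt_col_avoid h huv h' hau hub := by
    rw [Int.cast_lt] at hau hub
    rw [R.col_eq_rank h' (hau.trans hub)]
    exact_mod_cast R.not_right_lt_rank_lt_left hpl hflat hmono hrow h (Int.cast_inj.1 huv)
      (s := .ofEdge h' (hau.trans hub)) ⟨hau.le, hub.le⟩

end Finite

end OrthDrawing.StrandOrder

theorem flatYMonotoneOrth_to_flatVR_general {V : Type*} [Finite V] (G : SimpleGraph V)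
    (D : OrthDrawing G) (hpl : D.IsPlanar) (hflat : D.IsFlat)
    (hmono : D.IsYMonotone) (hrow : D.HasIntRows) :
    ∃ D' : OrthDrawing G, D'.IsPlanar ∧ D'.IsFlat ∧ D'.IsVR ∧ D'.IntCoords ∧
      (∀ v, (D'.box v).y1 = (D.box v).y1) ∧
      (∀ v w : V, (D.box v).y1 = (D.box w).y1 → (D.box v).x2 < (D.box w).x1 →
        (D'.box v).x2 < (D'.box w).x1) ∧
      (∀ h : ℕ, D.InHeight h ↔ D'.InHeight h) := by
  obtain ⟨R⟩ := OrthDrawing.nonempty_strandOrder hpl hflat hmono hrow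
  let L := R.layout hpl hflat hmono hrow
  have hy (v : V) : (L.toDrawing.box v).y1 = (D.box v).y1 := OrthDrawing.cast_row hrow v
  refine ⟨L.toDrawing, L.isPlanar_toDrawing, L.isFlat_toDrawing, L.isVR_toDrawing,
    L.intCoords_toDrawing (fun _ => ⟨_, rfl⟩) (fun _ => ⟨_, rfl⟩) (fun _ => ⟨_, rfl⟩)
      fun _ _ => ⟨_, rfl⟩, hy, fun v w hvw hlt => ?_, fun h => ?_⟩
  · exact Int.cast_lt.2 (R.right_lt_left ((OrthDrawing.row_eq_row_iff hrow).2 hvw)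
      ((D.box v).hx.trans_lt hlt))
  · rw [OrthDrawing.inHeight_iff hpl hflat hmono, OrthDrawing.inHeight_iff L.isPlanar_toDrawing
      L.isFlat_toDrawing L.isYMonotone_toDrawing]
    simp only [hy]

/-- Any planar flat y-monotone orthogonal drawing `D` of a finite
simple graph `G` can be transformed into a planar flat visibility representation `D'`
of `G` with the same y-coordinates and the same left-to-right order in each row;
in particular `D'` has the same height. -/
theorem flatYMonotoneOrth_to_flatVR {V : Type} [Fintype V] (G : SimpleGraph V)
    (D : OrthDrawing G) (hpl : D.IsPlanar) (hflat : D.IsFlat)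
    (hmono : D.IsYMonotone) (hint : D.IntCoords) :
    ∃ D' : OrthDrawing G, D'.IsPlanar ∧ D'.IsFlat ∧ D'.IsVR ∧ D'.IntCoords ∧
      (∀ v, (D'.box v).y1 = (D.box v).y1) ∧
      (∀ v w : V, (D.box v).y1 = (D.box w).y1 → (D.box v).x2 < (D.box w).x1 →
        (D'.box v).x2 < (D'.box w).x1) ∧
      (∀ h : ℕ, D.InHeight h ↔ D'.InHeight h) :=
  flatYMonotoneOrth_to_flatVR_general G D hpl hflat hmono fun p hp => (hint p hp).2
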